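/- Define F_2(ν) = (1/2880)(4·p_2(ν)·p_1(ν)² − p_1(ν)⁴ + 24·p_2(ν)·p_1(ν) − 4·p_1(ν)³ + 30·p_2(ν) + 5·p_1(ν)² + 18·p_1(ν)) for ν ∈ ℕ³, and g_2(μ) = (1/8640)(8·p_2(μ)·p_1(μ)² + p_1(μ)⁴ + 48·p_2(μ)·p_1(μ) + 12·p_1(μ)³ + 60·p_2(μ) + 45·p_1(μ)² + 54·p_1(μ)) for a partition μ. Then for every integer n ≥ 1 and every finite number of variables, the following identity of symmetric polynomials over ℚ holds: Σ_{ν∈ℕ³, ν_1+ν_2+ν_3=n} F_2(ν) · e_{ν_1}·e_{ν_2}·e_{ν_3} = Σ_{μ ⊢ n} (−1)^{n−ℓ(μ)} · g_2(μ) · 3^{ℓ(μ)} · z_μ^{−1} · p_μ. -/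

import Mathlib

/-! Write `E = ∑ eₙ tⁿ`, `D = t d/dt` and `L = ∑_{k ≥ 1} (-1)^(k+1) p_k t^k`. Newton's identities say
`D E = L E`. Let `w(μ) = (-1)^(n-ℓ) 3^ℓ z_μ⁻¹ p_μ` and `H = ∑_μ w(μ) t^|μ|`. Removing one part from a
partition gives, for every additive statistic `f(μ) = ∑_j f(μ_j)`,
`∑_μ f(μ) w(μ) t^|μ| = (∑_k (f(k)/k) 3 (-1)^(k+1) p_k t^k) H` (`sum_stat_smul_partWeight`).
For `f = id` this is `D H = 3 L H`, an equation which `E³` satisfies as well, so `H = E³`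
(`weightSeries_eq`). For `f(k) = k²` it says that `Q = ∑_μ p₂(μ) w(μ) t^|μ|` is `3 (D L) H`.

On the other side, `∑_ν p₂(ν) e_ν t^|ν| = 3 E² D²E = 3 (D L + L²) E³`, while
`D² E³ = (3 D L + 9 L²) E³`, whence `3 ∑_ν p₂(ν) e_ν = n² ∑_μ w(μ) + 2 ∑_μ p₂(μ) w(μ)` in
degree `n`. As `p₁(ν) = p₁(μ) = n`, the theorem becomes a comparison of polynomials in `n`. -/

open MvPolynomial Finset

/-- The weight function `F₂`, as a function of the first two power sums of its argument. -/
def F2val (p1 p2 : ℚ) : ℚ :=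
  (1 / 2880) * (4 * p2 * p1 ^ 2 - p1 ^ 4 + 24 * p2 * p1 - 4 * p1 ^ 3
    + 30 * p2 + 5 * p1 ^ 2 + 18 * p1)

/-- The weight function `g₂`, as a function of the first two power sums of its argument. -/
def g2val (p1 p2 : ℚ) : ℚ :=
  (1 / 8640) * (8 * p2 * p1 ^ 2 + p1 ^ 4 + 48 * p2 * p1 + 12 * p1 ^ 3
    + 60 * p2 + 45 * p1 ^ 2 + 54 * p1)

/-! ### Weighted sums over partitions -/

/-- The constant `z_s = ∏ i^{mᵢ} mᵢ!` of a multiset of natural numbers. -/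
def zConst (s : Multiset ℕ) : ℚ :=
  (s.prod : ℚ) * ∏ i ∈ s.toFinset, ((s.count i).factorial : ℚ)

theorem zConst_cons (i : ℕ) (s : Multiset ℕ) :
    zConst (i ::ₘ s) = i * (s.count i + 1) * zConst s := by
  have h1 : ∏ j ∈ s.toFinset, ((s.count j).factorial : ℚ)
      = ∏ j ∈ (i ::ₘ s).toFinset, ((s.count j).factorial : ℚ) := by
    apply Finset.prod_subset
    · intro j hj
      simp at hj ⊢
      exact Or.inr hj
    · intro j _ hj
      have : s.count j = 0 := by simpa using hj
      simp [this]
  have hi : i ∈ (i ::ₘ s).toFinset := by simp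
  unfold zConst
  rw [h1, ← Finset.mul_prod_erase _ _ hi,
    ← Finset.mul_prod_erase _ (fun j => ((s.count j).factorial : ℚ)) hi]
  have h2 : ∏ j ∈ (i ::ₘ s).toFinset.erase i, (((i ::ₘ s).count j).factorial : ℚ)
      = ∏ j ∈ (i ::ₘ s).toFinset.erase i, ((s.count j).factorial : ℚ) := by
    refine Finset.prod_congr rfl fun j hj => ?_
    rw [Multiset.count_cons_of_ne (Finset.ne_of_mem_erase hj)]
  rw [h2, Multiset.count_cons_self, Nat.factorial_succ, Multiset.prod_cons]
  push_cast
  ring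

section Partitions

variable {R : Type*} [CommRing R] [Algebra ℚ R]

/-- The weight `z_s⁻¹ ∏_{i ∈ s} a i` of a multiset. -/
noncomputable def partWeight (a : ℕ → R) (s : Multiset ℕ) : R :=
  (zConst s)⁻¹ • (s.map a).prod

/-- Removing a part `i`: the multiplicity of `i` cancels against the factor lost in `z`. -/
theorem count_smul_partWeight_cons (a : ℕ → R) (i : ℕ) (s : Multiset ℕ) :
    ((i ::ₘ s).count i : ℚ) • partWeight a (i ::ₘ s) = (i : ℚ)⁻¹ • (a i * partWeight a s) := by
  have h : (s.count i + 1 : ℚ) ≠ 0 := by positivity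
  unfold partWeight
  rw [zConst_cons, Multiset.map_cons, Multiset.prod_cons, Multiset.count_cons_self,
    mul_smul_comm, smul_smul, smul_smul]
  congr 1
  push_cast
  rw [mul_inv, mul_inv]
  field_simp

/-- The partitions of `n`, as multisets of positive integers. Having the same type for all `n`,
they can be compared across different `n` without casts. -/
def partFinset (n : ℕ) : Finset (Multiset ℕ) :=
  (univ : Finset n.Partition).image Nat.Partition.parts

theorem mem_partFinset {n : ℕ} {s : Multiset ℕ} :
    s ∈ partFinset n ↔ s.sum = n ∧ ∀ i ∈ s, 0 < i := by
  simp only [partFinset, mem_image, mem_univ, true_and]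
  constructor
  · rintro ⟨μ, rfl⟩
    exact ⟨μ.parts_sum, fun i hi => μ.parts_pos hi⟩
  · rintro ⟨h, h'⟩
    exact ⟨⟨s, fun {i} hi => h' i hi, h⟩, rfl⟩

theorem sum_partFinset {M : Type*} [AddCommMonoid M] (n : ℕ) (f : Multiset ℕ → M) :
    ∑ s ∈ partFinset n, f s = ∑ μ : n.Partition, f μ.parts :=
  Finset.sum_image fun _ _ _ _ h => Nat.Partition.ext h

/-- The total weight of the partitions of `n`. -/
noncomputable def partTotal (a : ℕ → R) (n : ℕ) : R :=
  ∑ s ∈ partFinset n, partWeight a s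

/-- An additive statistic summed over partitions, by marking one part and removing it. At
`k = 0` the right-hand summand vanishes because `0⁻¹ = 0`. -/
theorem sum_stat_smul_partWeight (a : ℕ → R) (f : ℕ → ℚ) (n : ℕ) :
    ∑ s ∈ partFinset n, (s.map f).sum • partWeight a s
      = ∑ x ∈ antidiagonal n, (f x.1 * (x.1 : ℚ)⁻¹) • (a x.1 * partTotal a x.2) := by
  have hpos : ∑ x ∈ antidiagonal n, (f x.1 * (x.1 : ℚ)⁻¹) • (a x.1 * partTotal a x.2)
      = ∑ x ∈ antidiagonal n with 0 < x.1,
        (f x.1 * (x.1 : ℚ)⁻¹) • (a x.1 * partTotal a x.2) := by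
    symm
    apply Finset.sum_filter_of_ne
    intro x _ hx
    by_contra h
    have : x.1 = 0 := by omega
    simp [this] at hx
  rw [hpos]
  simp only [Finset.sum_multiset_map_count, Finset.sum_smul, partTotal, Finset.mul_sum,
    Finset.smul_sum]
  rw [Finset.sum_sigma', Finset.sum_sigma']
  refine Finset.sum_nbij' (fun x => ⟨(x.2, n - x.2), x.1.erase x.2⟩)
    (fun y => ⟨y.1.1 ::ₘ y.2, y.1.1⟩) ?_ ?_ ?_ ?_ ?_
  · rintro ⟨s, i⟩ h
    simp only [mem_sigma, mem_partFinset, Multiset.mem_toFinset, mem_filter,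
      HasAntidiagonal.mem_antidiagonal] at h ⊢
    obtain ⟨⟨hs, hp⟩, hi⟩ := h
    have := Multiset.cons_erase hi
    have h3 : i + (s.erase i).sum = n := by rw [← Multiset.sum_cons, this, hs]
    exact ⟨⟨by omega, hp i hi⟩, by omega, fun j hj => hp j (Multiset.mem_of_mem_erase hj)⟩
  · rintro ⟨⟨i, m⟩, s⟩ h
    simp only [mem_sigma, mem_partFinset, Multiset.mem_toFinset, mem_filter,
      HasAntidiagonal.mem_antidiagonal] at h ⊢
    obtain ⟨⟨hn, hi⟩, hs, hp⟩ := h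
    refine ⟨⟨by rw [Multiset.sum_cons, hs, hn], fun j hj => ?_⟩, by simp⟩
    rcases Multiset.mem_cons.1 hj with rfl | hj
    · exact hi
    · exact hp j hj
  · rintro ⟨s, i⟩ h
    simp only [mem_sigma, Multiset.mem_toFinset] at h
    simp [Multiset.cons_erase h.2]
  · rintro ⟨⟨i, m⟩, s⟩ h
    simp only [mem_sigma, mem_filter, HasAntidiagonal.mem_antidiagonal] at h
    obtain ⟨⟨hn, hi⟩, -⟩ := h
    have : n - i = m := by omega
    simp [this]
  · rintro ⟨s, i⟩ h
    simp only [mem_sigma, Multiset.mem_toFinset] at h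
    have key := count_smul_partWeight_cons a i (s.erase i)
    rw [Multiset.cons_erase h.2] at key
    simp only
    rw [mul_smul, ← key, smul_smul, nsmul_eq_mul, mul_comm]

end Partitions

/-! ### The Euler operator on power series -/

section Series

variable {R : Type*} [CommRing R]

/-- The Euler operator `t d/dt` on power series. -/
noncomputable def eulerD (R : Type*) [CommRing R] :
    Derivation R (PowerSeries R) (PowerSeries R) :=
  (PowerSeries.X : PowerSeries R) • PowerSeries.derivative R

theorem coeff_eulerD (f : PowerSeries R) (n : ℕ) :
    PowerSeries.coeff n (eulerD R f) = n * PowerSeries.coeff n f := by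
  cases n with
  | zero => simp [eulerD]
  | succ n =>
    simp only [eulerD, Derivation.smul_apply, smul_eq_mul, PowerSeries.coeff_succ_X_mul,
      PowerSeries.coeff_derivative]
    push_cast
    ring

/-- A solution of `D f = A f`, with `A` of zero constant term, is determined by its constant
term. -/
theorem eq_of_eulerD_eq [Algebra ℚ R] {A f g : PowerSeries R}
    (hA : PowerSeries.coeff 0 A = 0) (hf : eulerD R f = A * f) (hg : eulerD R g = A * g)
    (h0 : PowerSeries.coeff 0 f = PowerSeries.coeff 0 g) : f = g := by
  ext n
  induction n using Nat.strong_induction_on with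
  | _ n ih =>
    rcases Nat.eq_zero_or_pos n with rfl | hn
    · exact h0
    have h : (n : R) * PowerSeries.coeff n f = n * PowerSeries.coeff n g := by
      rw [← coeff_eulerD, ← coeff_eulerD, hf, hg, PowerSeries.coeff_mul, PowerSeries.coeff_mul]
      refine Finset.sum_congr rfl fun x hx => ?_
      rw [HasAntidiagonal.mem_antidiagonal] at hx
      rcases Nat.eq_zero_or_pos x.1 with h | h
      · rw [h, hA, zero_mul, zero_mul]
      · rw [ih x.2 (by omega)]
    have hu : (n : ℚ) ≠ 0 := by positivity
    have h' : (n : ℚ) • PowerSeries.coeff n f = (n : ℚ) • PowerSeries.coeff n g := by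
      simpa [Algebra.smul_def] using h
    exact (smul_right_injective R hu) h'

theorem coeff_ofNat_mul (n c : ℕ) [c.AtLeastTwo] (f : PowerSeries R) :
    PowerSeries.coeff n ((ofNat(c) : PowerSeries R) * f) = ofNat(c) * PowerSeries.coeff n f := by
  rw [← map_ofNat (PowerSeries.C (R := R)) c, PowerSeries.coeff_C_mul]

theorem sum_antidiagonalTuple_three {M : Type*} [AddCommMonoid M] (n : ℕ)
    (f : ℕ → ℕ → ℕ → M) :
    ∑ v ∈ Finset.Nat.antidiagonalTuple 3 n, f (v 0) (v 1) (v 2)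
      = ∑ x ∈ antidiagonal n, ∑ y ∈ antidiagonal x.1, f y.1 y.2 x.2 := by
  rw [Finset.sum_sigma']
  refine Finset.sum_nbij' (fun v => ⟨(v 0 + v 1, v 2), (v 0, v 1)⟩)
    (fun z => ![z.2.1, z.2.2, z.1.2]) ?_ ?_ ?_ ?_ ?_
  · intro v hv
    simp only [Finset.Nat.mem_antidiagonalTuple, Fin.sum_univ_three] at hv
    simp [hv]
  · rintro ⟨⟨a, b⟩, c, d⟩ h
    simp only [mem_sigma, HasAntidiagonal.mem_antidiagonal] at h
    simp only [Finset.Nat.mem_antidiagonalTuple, Fin.sum_univ_three]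
    simp
    omega
  · intro v _
    ext i
    fin_cases i <;> rfl
  · rintro ⟨⟨a, b⟩, c, d⟩ h
    simp only [mem_sigma, HasAntidiagonal.mem_antidiagonal] at h
    simp [h.2]
  · intro v _
    rfl

theorem coeff_mul_three (n : ℕ) (f g h : PowerSeries R) :
    PowerSeries.coeff n (f * g * h) = ∑ v ∈ Finset.Nat.antidiagonalTuple 3 n,
      PowerSeries.coeff (v 0) f * PowerSeries.coeff (v 1) g * PowerSeries.coeff (v 2) h := by
  rw [sum_antidiagonalTuple_three n fun i j k =>
    PowerSeries.coeff i f * PowerSeries.coeff j g * PowerSeries.coeff k h]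
  simp only [PowerSeries.coeff_mul, Finset.sum_mul]

end Series

/-! ### Generating series of symmetric polynomials -/

section Symmetric

variable (σ : Type*) [Fintype σ]

/-- The generating series `∑ eₙ tⁿ`. -/
noncomputable def esymmSeries : PowerSeries (MvPolynomial σ ℚ) := PowerSeries.mk (esymm σ ℚ)

/-- The signed power sum `(-1)^(k+1) p_k`. -/
noncomputable def signedPsum (k : ℕ) : MvPolynomial σ ℚ := (-1) ^ (k + 1) * psum σ ℚ k

/-- The series `∑_{k ≥ 1} (-1)^(k+1) p_k t^k`, the logarithmic derivative (for `t d/dt`) of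
`esymmSeries`. -/
noncomputable def psumSeries : PowerSeries (MvPolynomial σ ℚ) :=
  PowerSeries.mk fun k => if k = 0 then 0 else signedPsum σ k

/-- The series `∑_μ (-1)^(|μ|-ℓ(μ)) 3^ℓ(μ) z_μ⁻¹ p_μ t^|μ|`. -/
noncomputable def weightSeries : PowerSeries (MvPolynomial σ ℚ) :=
  PowerSeries.mk (partTotal fun k => 3 * signedPsum σ k)

/-- Newton's identities. -/
theorem eulerD_esymmSeries : eulerD _ (esymmSeries σ) = psumSeries σ * esymmSeries σ := by
  ext1 n
  rw [coeff_eulerD, mul_comm (psumSeries σ), PowerSeries.coeff_mul]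
  simp only [esymmSeries, psumSeries, PowerSeries.coeff_mk]
  rw [mul_esymm_eq_sum, Finset.mul_sum, Finset.sum_filter]
  refine Finset.sum_congr rfl fun x hx => ?_
  rw [HasAntidiagonal.mem_antidiagonal] at hx
  by_cases h : x.2 = 0
  · rw [if_pos h, if_neg (by omega), mul_zero]
  · rw [if_neg h, if_pos (by omega), signedPsum, ← hx]
    have h1 : ((-1 : MvPolynomial σ ℚ)) ^ x.1 * (-1) ^ x.1 = 1 := by
      rw [← mul_pow]; simp
    linear_combination (-1 : MvPolynomial σ ℚ) ^ (x.2 + 1) * esymm σ ℚ x.1 * psum σ ℚ x.2 * h1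

theorem eulerD_weightSeries :
    eulerD _ (weightSeries σ) = 3 * psumSeries σ * weightSeries σ := by
  ext1 n
  have h := sum_stat_smul_partWeight (fun k => 3 * signedPsum σ k) (fun k => (k : ℚ)) n
  have h2 : ∀ s ∈ partFinset n, (s.map fun k : ℕ => (k : ℚ)).sum = n := by
    intro s hs
    rw [← (mem_partFinset.1 hs).1]
    simp [Nat.cast_multiset_sum]
  rw [Finset.sum_congr rfl fun s hs => by rw [h2 s hs], ← Finset.smul_sum] at h
  rw [coeff_eulerD, weightSeries, PowerSeries.coeff_mk, PowerSeries.coeff_mul]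
  have h3 : (n : MvPolynomial σ ℚ) * partTotal (fun k => 3 * signedPsum σ k) n
      = (n : ℚ) • partTotal (fun k => 3 * signedPsum σ k) n := by
    simp [Algebra.smul_def]
  rw [h3, partTotal, h]
  refine Finset.sum_congr rfl fun x _ => ?_
  rw [coeff_ofNat_mul, psumSeries, PowerSeries.coeff_mk, PowerSeries.coeff_mk]
  by_cases hx : x.1 = 0
  · simp [hx]
  · have : (x.1 : ℚ) ≠ 0 := by exact_mod_cast hx
    rw [mul_inv_cancel₀ this, one_smul, if_neg hx]

/-- The series `∑_μ p₂(μ) w(μ) t^|μ|` equals `3 (D L) H`. -/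
theorem sum_sq_partWeight (n : ℕ) :
    ∑ s ∈ partFinset n, (s.map fun k : ℕ => (k : ℚ) ^ 2).sum •
      partWeight (fun k => 3 * signedPsum σ k) s
      = PowerSeries.coeff n (3 * eulerD _ (psumSeries σ) * weightSeries σ) := by
  rw [sum_stat_smul_partWeight (fun k => 3 * signedPsum σ k) (fun k => (k : ℚ) ^ 2) n,
    PowerSeries.coeff_mul]
  refine Finset.sum_congr rfl fun x _ => ?_
  rw [coeff_ofNat_mul, coeff_eulerD, psumSeries, PowerSeries.coeff_mk, weightSeries, PowerSeries.coeff_mk]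
  by_cases hx : x.1 = 0
  · simp [hx]
  · have : (x.1 : ℚ) ≠ 0 := by exact_mod_cast hx
    rw [sq, mul_assoc, mul_inv_cancel₀ this, if_neg hx, Algebra.smul_def]
    simp
    ring

theorem weightSeries_eq : weightSeries σ = esymmSeries σ ^ 3 := by
  refine eq_of_eulerD_eq (A := 3 * psumSeries σ) ?_ (eulerD_weightSeries σ) ?_ ?_
  · simp [psumSeries]
  · rw [Derivation.leibniz_pow, eulerD_esymmSeries]
    simp
    ring
  · have h : partFinset 0 = {0} := by
      ext s
      rw [mem_partFinset, mem_singleton]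
      constructor
      · rintro ⟨h, h'⟩
        refine Multiset.eq_zero_of_forall_notMem fun i hi => ?_
        have := Multiset.le_sum_of_mem hi
        have := h' i hi
        omega
      · rintro rfl
        simp
    simp [weightSeries, esymmSeries, partTotal, h, partWeight, zConst]

/-- The relation between the second moments of the two weights; in degree `n` it reads
`3 ∑_ν p₂(ν) e_ν = n² ∑_μ w(μ) + 2 ∑_μ p₂(μ) w(μ)`. -/
theorem eulerD_cube :
    3 * (3 * (eulerD _ (eulerD _ (esymmSeries σ)) * esymmSeries σ * esymmSeries σ))
      = eulerD _ (eulerD _ (weightSeries σ))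
        + 2 * (3 * eulerD _ (psumSeries σ) * weightSeries σ) := by
  have h3 : eulerD (MvPolynomial σ ℚ) (3 : PowerSeries (MvPolynomial σ ℚ)) = 0 := by
    simpa using (eulerD (MvPolynomial σ ℚ)).map_natCast 3
  rw [eulerD_weightSeries]
  simp only [Derivation.leibniz, eulerD_weightSeries, eulerD_esymmSeries, smul_eq_mul, h3]
  rw [weightSeries_eq]
  ring

theorem sum_esymm (n : ℕ) :
    ∑ v ∈ Finset.Nat.antidiagonalTuple 3 n,
      esymm σ ℚ (v 0) * esymm σ ℚ (v 1) * esymm σ ℚ (v 2)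
      = PowerSeries.coeff n (weightSeries σ) := by
  rw [weightSeries_eq, pow_succ, sq, coeff_mul_three]
  simp [esymmSeries]

theorem sum_sq_esymm (n : ℕ) :
    ∑ v ∈ Finset.Nat.antidiagonalTuple 3 n,
      ((v 0 : ℚ) ^ 2 + (v 1) ^ 2 + (v 2) ^ 2) •
        (esymm σ ℚ (v 0) * esymm σ ℚ (v 1) * esymm σ ℚ (v 2))
      = PowerSeries.coeff n
        (3 * (eulerD _ (eulerD _ (esymmSeries σ)) * esymmSeries σ * esymmSeries σ)) := by
  set E := esymmSeries σ
  set F := eulerD _ (eulerD _ E) with hF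
  have h : 3 * (F * E * E) = F * E * E + E * F * E + E * E * F := by ring
  rw [h, map_add, map_add, coeff_mul_three, coeff_mul_three, coeff_mul_three,
    ← Finset.sum_add_distrib, ← Finset.sum_add_distrib]
  refine Finset.sum_congr rfl fun v _ => ?_
  simp only [hF, coeff_eulerD, E, esymmSeries, PowerSeries.coeff_mk, Algebra.smul_def]
  simp
  ring

/-- The weight used here is the one of the theorem: the signs satisfy
`∏_j (-1)^(μ_j + 1) = (-1)^(n - ℓ(μ))`, the truncated subtraction being exact as `ℓ(μ) ≤ n`. -/
theorem partWeight_parts {n : ℕ} (μ : n.Partition) :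
    partWeight (fun k => 3 * signedPsum σ k) μ.parts
      = ((-1 : ℚ) ^ (n - μ.parts.card) * 3 ^ μ.parts.card * (zConst μ.parts)⁻¹) •
        psumPart σ ℚ μ := by
  have key : ∀ s : Multiset ℕ, (s.map fun k => 3 * signedPsum σ k).prod
      = ((-1 : ℚ) ^ (s.sum + s.card) * 3 ^ s.card) • (s.map (psum σ ℚ)).prod := by
    intro s
    induction s using Multiset.induction with
    | empty => simp
    | cons i s ih =>
      rw [Multiset.map_cons, Multiset.prod_cons, ih]
      simp only [Multiset.map_cons, Multiset.prod_cons, Multiset.sum_cons,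
        Multiset.card_cons, signedPsum, Algebra.smul_def]
      simp [map_ofNat]
      ring
  have hle : μ.parts.card ≤ n := by
    have := Multiset.card_nsmul_le_sum (s := μ.parts) (a := 1) fun i hi => μ.parts_pos hi
    rwa [μ.parts_sum, smul_eq_mul, mul_one] at this
  have hs : (-1 : ℚ) ^ (n + μ.parts.card) = (-1) ^ (n - μ.parts.card) := by
    rw [show n + μ.parts.card = (n - μ.parts.card) + 2 * μ.parts.card by omega, pow_add, pow_mul]
    simp
  rw [partWeight, key, μ.parts_sum, hs, smul_smul, psumPart, mul_comm]

end Symmetric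

/-- **The `k = 2` case of the abstract C-to-Q identity:** for `n ≥ 1`, in any finite number
of variables over `ℚ`, `∑_{ν∈ℕ³, |ν|=n} F₂(ν) e_{ν₁} e_{ν₂} e_{ν₃}
  = ∑_{μ ⊢ n} (−1)^{n−ℓ(μ)} g₂(μ) 3^{ℓ(μ)} z_μ⁻¹ p_μ`. -/
theorem F2_esymm_eq_g2_psum (n : ℕ) (hn : 1 ≤ n)
    (σ : Type*) [Fintype σ] [DecidableEq σ] :
    ∑ v ∈ Finset.Nat.antidiagonalTuple 3 n,
        F2val ((v 0 : ℚ) + (v 1) + (v 2)) ((v 0 : ℚ) ^ 2 + (v 1) ^ 2 + (v 2) ^ 2) •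
          (esymm σ ℚ (v 0) * esymm σ ℚ (v 1) * esymm σ ℚ (v 2)) =
    ∑ μ : n.Partition,
      ((-1 : ℚ) ^ (n - μ.parts.card) *
        g2val (μ.parts.sum : ℚ) (((μ.parts.map (· ^ 2)).sum : ℕ) : ℚ) *
        3 ^ μ.parts.card *
        (((μ.parts.prod : ℕ) : ℚ) *
          ∏ i ∈ μ.parts.toFinset, ((μ.parts.count i).factorial : ℚ))⁻¹) •
        psumPart σ ℚ μ := by
  set W := PowerSeries.coeff n (weightSeries σ) with hW
  set Q := PowerSeries.coeff n (3 * eulerD _ (psumSeries σ) * weightSeries σ) with hQ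
  set S := PowerSeries.coeff n
    (3 * (eulerD _ (eulerD _ (esymmSeries σ)) * esymmSeries σ * esymmSeries σ)) with hS
  have hSQ : (3 : ℚ) • S = (n : ℚ) ^ 2 • W + (2 : ℚ) • Q := by
    have h := congrArg (PowerSeries.coeff n) (eulerD_cube σ)
    rw [coeff_ofNat_mul, ← hS, map_add, coeff_ofNat_mul, ← hQ, coeff_eulerD, coeff_eulerD,
      ← hW] at h
    simp only [Algebra.smul_def, map_pow, map_natCast, map_ofNat]
    linear_combination h
  -- On both sides `p₁ = n`, so each weight is an affine function of `p₂`.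
  have hL : ∑ v ∈ Finset.Nat.antidiagonalTuple 3 n,
        F2val ((v 0 : ℚ) + (v 1) + (v 2)) ((v 0 : ℚ) ^ 2 + (v 1) ^ 2 + (v 2) ^ 2) •
          (esymm σ ℚ (v 0) * esymm σ ℚ (v 1) * esymm σ ℚ (v 2))
      = ((4 * (n : ℚ) ^ 2 + 24 * n + 30) / 2880) • S
        + ((-(n : ℚ) ^ 4 - 4 * n ^ 3 + 5 * n ^ 2 + 18 * n) / 2880) • W := by
    rw [hS, hW, ← sum_sq_esymm, ← sum_esymm, Finset.smul_sum, Finset.smul_sum,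
      ← Finset.sum_add_distrib]
    refine Finset.sum_congr rfl fun v hv => ?_
    rw [Finset.Nat.mem_antidiagonalTuple, Fin.sum_univ_three] at hv
    rw [smul_smul, ← add_smul, ← hv, F2val]
    congr 1
    push_cast
    ring
  have hR : ∑ μ : n.Partition,
      ((-1 : ℚ) ^ (n - μ.parts.card) *
        g2val (μ.parts.sum : ℚ) (((μ.parts.map (· ^ 2)).sum : ℕ) : ℚ) *
        3 ^ μ.parts.card *
        (((μ.parts.prod : ℕ) : ℚ) *
          ∏ i ∈ μ.parts.toFinset, ((μ.parts.count i).factorial : ℚ))⁻¹) •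
        psumPart σ ℚ μ
      = ((8 * (n : ℚ) ^ 2 + 48 * n + 60) / 8640) • Q
        + (((n : ℚ) ^ 4 + 12 * n ^ 3 + 45 * n ^ 2 + 54 * n) / 8640) • W := by
    rw [hQ, hW, ← sum_sq_partWeight, weightSeries, PowerSeries.coeff_mk, partTotal,
      sum_partFinset, sum_partFinset, Finset.smul_sum, Finset.smul_sum, ← Finset.sum_add_distrib]
    refine Finset.sum_congr rfl fun μ _ => ?_
    have h2 : (((μ.parts.map (· ^ 2)).sum : ℕ) : ℚ)
        = (μ.parts.map fun k : ℕ => (k : ℚ) ^ 2).sum := by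
      rw [Nat.cast_multiset_sum, Multiset.map_map]
      simp
    rw [partWeight_parts, smul_smul, smul_smul, smul_smul, ← add_smul, h2, μ.parts_sum, g2val,
      zConst]
    congr 1
    ring
  have hS' : S = (1 / 3 : ℚ) • ((n : ℚ) ^ 2 • W + (2 : ℚ) • Q) := by
    rw [← hSQ, smul_smul]
    norm_num
  rw [hL, hR, hS']
  module
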